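/- arXiv:2602.12691 — 2 statements merged into one kernel-verified Lean document; each statement's English description precedes it below -/
import Mathlib

section
/- Let A be a finite nonempty set, β > 0 a real number, Q : A → ℝ a function, and π_ref a probability mass function on A with π_ref(a) > 0 for all a ∈ A. Define π*(a) = π_ref(a) · exp(Q(a)/β) / Z with Z = Σ_{b∈A} π_ref(b) · exp(Q(b)/β), and set ε = KL(π* ‖ π_ref). Then π* solves the KL-constrained policy improvement problem: for every probability mass function π on A with KL(π ‖ π_ref) ≤ ε, one has Σ_a π(a) Q(a) ≤ Σ_a π*(a) Q(a). -/
/-!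
The Gibbs tilt satisfies `log (π* a / πref a) = Q a / β - log Z`, which gives for every pmf `p`
`KL(p ‖ πref) = KL(p ‖ π*) + E_p[Q] / β - log Z` (`KLdiv_eq_KLdiv_tilt_add`).
At `p = π*` the first term on the right vanishes. Comparing this with the identity at a
feasible `p = π`, the constraint `KL(π ‖ πref) ≤ ε` reads
`KL(π ‖ π*) + E_π[Q] / β ≤ E_{π*}[Q] / β`, and Gibbs' inequality `KL(π ‖ π*) ≥ 0`
(`KLdiv_nonneg_of_pmf`) concludes, as `β > 0`.
-/

/-- Kullback–Leibler divergence between two pmfs on a finite set,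
with the convention `0 * log 0 = 0`. -/
noncomputable def KLdiv {A : Type*} [Fintype A] (p q : A → ℝ) : ℝ :=
  ∑ a, p a * Real.log (p a / q a)

/-- Gibbs' inequality, by summing `p a - q a ≤ p a * log (p a / q a)`. -/
lemma KLdiv_nonneg_of_pmf {A : Type*} [Fintype A] {p q : A → ℝ}
    (hp : ∀ a, 0 ≤ p a) (hq : ∀ a, 0 < q a) (hps : ∑ a, p a = 1) (hqs : ∑ a, q a = 1) :
    0 ≤ KLdiv p q := by
  have key : ∀ a, p a - q a ≤ p a * Real.log (p a / q a) := by
    intro a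
    rcases (hp a).eq_or_lt with h | h
    · rw [← h]
      simpa using (hq a).le
    · have hlog := mul_le_mul_of_nonneg_left
        (Real.one_sub_inv_le_log_of_pos (div_pos h (hq a))) (hp a)
      have heq : p a * (1 - (p a / q a)⁻¹) = p a - q a := by
        field_simp
      linarith
  have hsum := Finset.sum_le_sum fun a (_ : a ∈ Finset.univ) => key a
  rw [Finset.sum_sub_distrib, hps, hqs] at hsum
  unfold KLdiv
  linarith

/-- Change of reference measure from `r` to its tilt `r * exp (Q / β) / Z`; neither the sign of
`p` nor the value of the constant `Z > 0` matters. -/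
lemma KLdiv_eq_KLdiv_tilt_add {A : Type*} [Fintype A] {p r s Q : A → ℝ} {β Z : ℝ}
    (hr : ∀ a, 0 < r a) (hZ : 0 < Z) (hs : ∀ a, s a = r a * Real.exp (Q a / β) / Z)
    (hps : ∑ a, p a = 1) :
    KLdiv p r = KLdiv p s + (∑ a, p a * Q a) / β - Real.log Z := by
  have key : ∀ a, p a * Real.log (p a / r a) =
      p a * Real.log (p a / s a) + p a * Q a / β - p a * Real.log Z := by
    intro a
    by_cases h : p a = 0
    · simp [h]
    · have hra := (hr a).ne'
      have he := (Real.exp_pos (Q a / β)).ne'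
      have hsa : s a ≠ 0 := by
        rw [hs]
        exact div_ne_zero (mul_ne_zero hra he) hZ.ne'
      rw [Real.log_div h hra, Real.log_div h hsa, hs, Real.log_div (mul_ne_zero hra he) hZ.ne',
        Real.log_mul hra he, Real.log_exp]
      ring
  unfold KLdiv
  rw [Finset.sum_congr rfl fun a _ => key a, Finset.sum_sub_distrib, Finset.sum_add_distrib,
    ← Finset.sum_div, ← Finset.sum_mul, hps, one_mul]

/-- Theorem 1 (Constraint Policy Improvement): the Gibbs-tilted policy
`π*(a) = π_ref(a) · exp(Q(a)/β) / Z` solves the KL-constrained policy improvement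
problem at constraint level `ε = KL(π* ‖ π_ref)`: every pmf `π` with
`KL(π ‖ π_ref) ≤ ε` has expected value `E_π[Q]` no greater than `E_{π*}[Q]`. -/
theorem gibbs_tilt_solves_kl_constrained_improvement
    {A : Type*} [Fintype A] [Nonempty A]
    (β : ℝ) (hβ : 0 < β) (Q : A → ℝ) (πref : A → ℝ)
    (href_pos : ∀ a, 0 < πref a) (href_sum : ∑ a, πref a = 1)
    (Z : ℝ) (hZ : Z = ∑ b, πref b * Real.exp (Q b / β))
    (πstar : A → ℝ) (hstar : ∀ a, πstar a = πref a * Real.exp (Q a / β) / Z)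
    (ε : ℝ) (hε : ε = KLdiv πstar πref) :
    ∀ π : A → ℝ, (∀ a, 0 ≤ π a) → (∑ a, π a = 1) →
      KLdiv π πref ≤ ε → (∑ a, π a * Q a) ≤ ∑ a, πstar a * Q a := by
  intro π hπ hπs hKL
  have hZpos : 0 < Z := by
    rw [hZ]
    exact Finset.sum_pos (fun b _ => mul_pos (href_pos b) (Real.exp_pos _)) Finset.univ_nonempty
  have hpos : ∀ a, 0 < πstar a := by
    intro a
    rw [hstar]
    exact div_pos (mul_pos (href_pos a) (Real.exp_pos _)) hZpos
  have hsum : ∑ a, πstar a = 1 := by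
    rw [Finset.sum_congr rfl fun a _ => hstar a, ← Finset.sum_div, ← hZ, div_self hZpos.ne']
  have hself : KLdiv πstar πstar = 0 := by
    simp [KLdiv, div_self (hpos _).ne']
  have h1 := KLdiv_eq_KLdiv_tilt_add href_pos hZpos hstar hπs
  have h2 := KLdiv_eq_KLdiv_tilt_add href_pos hZpos hstar hsum
  have h3 := KLdiv_nonneg_of_pmf hπ hpos hπs hsum
  have h4 : (∑ a, π a * Q a) / β ≤ (∑ a, πstar a * Q a) / β := by linarith
  exact (div_le_div_iff_of_pos_right hβ).mp h4
end

section
/- Let A be a finite nonempty set, β > 0 a real number, Q : A → ℝ a function, and π_ref a probability mass function on A with π_ref(a) > 0 for all a ∈ A. Define π*(a) = π_ref(a) · exp(Q(a)/β) / Z with Z = Σ_{b∈A} π_ref(b) · exp(Q(b)/β). Then Σ_a π*(a) Q(a) ≥ Σ_a π_ref(a) Q(a), i.e., the Gibbs-tilted policy achieves expected action value at least that of the reference policy (policy improvement). Moreover, equality holds if and only if Q is constant on A. -/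
/-!
Let `m = ∑ a, πref a * Q a`. Since `∑ a, πref a * (Q a - m) = 0`, the constant `exp (m / β)` can be
subtracted from the weights, which gives
`Z * (∑ a, πstar a * Q a - m) = ∑ a, πref a * ((Q a - m) * (exp (Q a / β) - exp (m / β)))`.
As `x ↦ exp (x / β)` is strictly increasing, every term on the right is nonnegative and vanishes
only when `Q a = m`.
-/

/-- Strict monotonicity of `x ↦ exp (x / β)`, as a sign condition on a product of differences. -/
lemma sub_mul_exp_sub_pos {β : ℝ} (hβ : 0 < β) {x m : ℝ} (h : x ≠ m) :
    0 < (x - m) * (Real.exp (x / β) - Real.exp (m / β)) := by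
  rcases lt_or_gt_of_ne h with h | h
  · have := Real.exp_lt_exp.2 (div_lt_div_of_pos_right h hβ)
    exact mul_pos_of_neg_of_neg (by linarith) (by linarith)
  · have := Real.exp_lt_exp.2 (div_lt_div_of_pos_right h hβ)
    exact mul_pos (by linarith) (by linarith)

/-- Policy improvement: the Gibbs-tilted policy `π*(a) = π_ref(a) · exp(Q(a)/β) / Z`
achieves expected action value at least that of the reference policy, with equality
if and only if `Q` is constant on `A`. -/
theorem gibbs_tilt_policy_improvement
    {A : Type*} [Fintype A] [Nonempty A]
    (β : ℝ) (hβ : 0 < β) (Q : A → ℝ) (πref : A → ℝ)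
    (href_pos : ∀ a, 0 < πref a) (href_sum : ∑ a, πref a = 1)
    (Z : ℝ) (hZ : Z = ∑ b, πref b * Real.exp (Q b / β))
    (πstar : A → ℝ) (hstar : ∀ a, πstar a = πref a * Real.exp (Q a / β) / Z) :
    ((∑ a, πref a * Q a) ≤ ∑ a, πstar a * Q a)
    ∧ ((∑ a, πstar a * Q a) = (∑ a, πref a * Q a) ↔ ∀ a b : A, Q a = Q b) := by
  have hZpos : 0 < Z := by
    rw [hZ]
    exact Finset.sum_pos (fun a _ => mul_pos (href_pos a) (Real.exp_pos _)) Finset.univ_nonempty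
  set m := ∑ a, πref a * Q a with hm
  have key : Z * (∑ a, πstar a * Q a - m)
      = ∑ a, πref a * ((Q a - m) * (Real.exp (Q a / β) - Real.exp (m / β))) := by
    have h1 : Z * ∑ a, πstar a * Q a = ∑ a, πref a * Real.exp (Q a / β) * Q a := by
      rw [Finset.mul_sum]
      refine Finset.sum_congr rfl fun a _ => ?_
      rw [hstar a]
      field_simp
    have h2 : ∀ a, πref a * ((Q a - m) * (Real.exp (Q a / β) - Real.exp (m / β)))
        = πref a * Real.exp (Q a / β) * Q a - πref a * Real.exp (Q a / β) * m
          - (πref a * Q a * Real.exp (m / β) - πref a * (m * Real.exp (m / β))) :=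
      fun a => by ring
    rw [mul_sub, h1, Finset.sum_congr rfl fun a _ => h2 a]
    simp only [Finset.sum_sub_distrib, ← Finset.sum_mul]
    rw [← hZ, ← hm, href_sum]
    ring
  have hnn : ∀ a, 0 ≤ πref a * ((Q a - m) * (Real.exp (Q a / β) - Real.exp (m / β))) := by
    intro a
    by_cases h : Q a = m
    · simp [h]
    · exact (mul_pos (href_pos a) (sub_mul_exp_sub_pos hβ h)).le
  refine ⟨?_, ?_, ?_⟩
  · have h := Finset.sum_nonneg fun a (_ : a ∈ Finset.univ) => hnn a
    rw [← key] at h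
    exact sub_nonneg.1 (nonneg_of_mul_nonneg_right h hZpos)
  · intro heq
    rw [heq, sub_self, mul_zero, eq_comm, Finset.sum_eq_zero_iff_of_nonneg fun a _ => hnn a] at key
    have hQ : ∀ a, Q a = m := fun a => by
      by_contra h
      exact (mul_pos (href_pos a) (sub_mul_exp_sub_pos hβ h)).ne' (key a (Finset.mem_univ a))
    intro a b
    rw [hQ a, hQ b]
  · intro hc
    have hQ : ∀ a, Q a = m := fun a => by
      rw [hm, Finset.sum_congr rfl fun b _ => by rw [hc b a], ← Finset.sum_mul, href_sum, one_mul]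
    have h0 : Z * (∑ a, πstar a * Q a - m) = 0 := by
      rw [key]
      exact Finset.sum_eq_zero fun a _ => by rw [hQ a, sub_self, zero_mul, mul_zero]
    exact sub_eq_zero.1 ((mul_eq_zero.1 h0).resolve_left hZpos.ne')
end
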